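/- arXiv:2210.04274 — 3 statements merged into one kernel-verified Lean document; each statement's English description precedes it below -/
import Mathlib

section
/- Let X be a set and let FR(X) = X × F(X) be the free rack on X, where F(X) is the free group on X, with operations (a,u) ▷ (b,v) = (a, u·v⁻¹·b·v) and (a,u) ▷⁻¹ (b,v) = (a, u·v⁻¹·b⁻¹·v). Then every subrack R of FR(X) is a free rack: there exists a subset S ⊆ R such that R, equipped with the operations induced from FR(X), together with the inclusion map S ↪ R, satisfies the universal property of the free rack on S; that is, for every rack Q and every function ρ : S → Q there exists a unique rack homomorphism ρ̄ : R → Q whose restriction to S equals ρ. -/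
/-- A rack: a set with two binary operations `act` (`▷`) and `inv` (`▷⁻¹`) satisfying
right self-distributivity for both operations and the cancellation laws
`(x ▷ y) ▷⁻¹ y = x = (x ▷⁻¹ y) ▷ y`. -/
structure RackStr (α : Type*) where
  act : α → α → α
  inv : α → α → α
  act_dist : ∀ x y z, act (act x y) z = act (act x z) (act y z)
  inv_dist : ∀ x y z, inv (inv x y) z = inv (inv x z) (inv y z)
  act_inv : ∀ x y, inv (act x y) y = x
  inv_act : ∀ x y, act (inv x y) y = x

/-- A rack homomorphism: a map preserving `▷`. -/
def IsRackHom {α β : Type*} (Ra : RackStr α) (Rb : RackStr β) (f : α → β) : Prop :=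
  ∀ x y, f (Ra.act x y) = Rb.act (f x) (f y)

/-- The free rack on `X`: the set `X × F(X)` with
`(a,u) ▷ (b,v) = (a, u·v⁻¹·b·v)` and `(a,u) ▷⁻¹ (b,v) = (a, u·v⁻¹·b⁻¹·v)`. -/
def freeRack (X : Type*) : RackStr (X × FreeGroup X) where
  act p q := (p.1, p.2 * q.2⁻¹ * FreeGroup.of q.1 * q.2)
  inv p q := (p.1, p.2 * q.2⁻¹ * (FreeGroup.of q.1)⁻¹ * q.2)
  act_dist := by
    intro x y z
    simp only [Prod.mk.injEq, true_and]
    group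
  inv_dist := by
    intro x y z
    simp only [Prod.mk.injEq, true_and]
    group
  act_inv := by
    intro x y
    simp only
    rw [Prod.mk.injEq]
    constructor
    · rfl
    · group
  inv_act := by
    intro x y
    simp only
    rw [Prod.mk.injEq]
    constructor
    · rfl
    · group

/-- The rack structure induced on a subset closed under `▷` and `▷⁻¹` (a subrack). -/
def RackStr.subrack {α : Type*} (Ra : RackStr α) (R : Set α)
    (hact : ∀ x ∈ R, ∀ y ∈ R, Ra.act x y ∈ R)
    (hinv : ∀ x ∈ R, ∀ y ∈ R, Ra.inv x y ∈ R) : RackStr R where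
  act x y := ⟨Ra.act x y, hact x x.2 y y.2⟩
  inv x y := ⟨Ra.inv x y, hinv x x.2 y y.2⟩
  act_dist x y z := Subtype.ext (Ra.act_dist x y z)
  inv_dist x y z := Subtype.ext (Ra.inv_dist x y z)
  act_inv x y := Subtype.ext (Ra.act_inv x y)
  inv_act x y := Subtype.ext (Ra.inv_act x y)

/-!
View `(a, u)` as the edge `u → a * u` of the Cayley graph of `F(X)`. Acting by `q` translates edges
on the right by `augmentation q`, so a subrack `R` is a set of edges stable under the subgroup `G`
generated by its augmentations, and each edge in `R` joins two vertices of one coset `u * G`.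
Walking from `1` to `u` while ignoring the edges of `R` ends at a representative `collapse R u` of
`u * G`; translating the edges of `R` so that they start at these representatives gives the basis
`S`.

A map `ρ : S → Q` labels each edge of `R` with the inverse of the translation of `Q` by the value of
`ρ` at the corresponding basis element. The product `φ u` of the labels along the path from `1` to
`u` is multiplicative on `G`, and `(a, u) ↦ (φ u)⁻¹ (ρ (a, collapse R u))` is the required
homomorphism.
-/

section Racks

variable {α β : Type*} {Ra : RackStr α} {Rb : RackStr β}

/-- A subrack of a rack, as a predicate on subsets. -/
structure RackStr.IsSubrack (Ra : RackStr α) (R : Set α) : Prop where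
  act_mem : ∀ x ∈ R, ∀ y ∈ R, Ra.act x y ∈ R
  inv_mem : ∀ x ∈ R, ∀ y ∈ R, Ra.inv x y ∈ R

theorem IsRackHom.map_inv {f : α → β} (hf : IsRackHom Ra Rb f) (x y : α) :
    f (Ra.inv x y) = Rb.inv (f x) (f y) := by
  rw [← Rb.act_inv (f (Ra.inv x y)) (f y), ← hf, Ra.inv_act]

theorem IsRackHom.isSubrack_eqLocus {f g : α → β} (hf : IsRackHom Ra Rb f)
    (hg : IsRackHom Ra Rb g) : Ra.IsSubrack {x | f x = g x} where
  act_mem x hx y hy := by rw [Set.mem_ofPred_eq, hf, hg, hx, hy]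
  inv_mem x hx y hy := by rw [Set.mem_ofPred_eq, hf.map_inv, hg.map_inv, hx, hy]

theorem RackStr.IsSubrack.image_val {R : Set α} (hR : Ra.IsSubrack R) {T : Set R}
    (hT : (Ra.subrack R hR.act_mem hR.inv_mem).IsSubrack T) :
    Ra.IsSubrack (Subtype.val '' T) where
  act_mem := by
    rintro _ ⟨x, hx, rfl⟩ _ ⟨y, hy, rfl⟩
    exact ⟨_, hT.act_mem x hx y hy, rfl⟩
  inv_mem := by
    rintro _ ⟨x, hx, rfl⟩ _ ⟨y, hy, rfl⟩
    exact ⟨_, hT.inv_mem x hx y hy, rfl⟩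

/-- The group of automorphisms of a rack. -/
def RackStr.autGroup (Ra : RackStr α) : Subgroup (Equiv.Perm α) where
  carrier := {f | IsRackHom Ra Ra f}
  one_mem' _ _ := rfl
  mul_mem' {f g} hf hg x y := by simp only [Equiv.Perm.mul_apply, hg x y, hf (g x) (g y)]
  inv_mem' {f} hf x y := f.injective <| by simp [hf _ _]

/-- The inner automorphism `x ↦ x ▷ q`. -/
def RackStr.translation (Ra : RackStr α) (q : α) : Ra.autGroup where
  val :=
    { toFun := (Ra.act · q)
      invFun := (Ra.inv · q)
      left_inv := (Ra.act_inv · q)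
      right_inv := (Ra.inv_act · q) }
  property x y := Ra.act_dist x y q

theorem RackStr.translation_smul (q x : α) : Ra.translation q • x = Ra.act x q := rfl

theorem RackStr.conj_translation (g : Ra.autGroup) (q : α) :
    g * Ra.translation q * g⁻¹ = Ra.translation (g • q) := by
  ext x
  change g • Ra.act (g⁻¹ • x) q = Ra.act x (g • q)
  rw [← smul_inv_smul g x, inv_smul_smul]
  exact g.2 _ _

end Racks

section PathProduct

variable {X H : Type*} [Group H]

theorem freeGroup_induction_left {p : FreeGroup X → Prop} (one : p 1)
    (of_mul : ∀ a u, p (FreeGroup.of a * u) ↔ p u) (u : FreeGroup X) : p u := by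
  have hu : u ∈ Subgroup.closure (Set.range FreeGroup.of) := by
    rw [FreeGroup.closure_range_of]
    exact Subgroup.mem_top u
  induction hu using Subgroup.closure_induction_left with
  | one => exact one
  | mul_left _ ha v _ hv =>
    obtain ⟨a, rfl⟩ := ha
    exact (of_mul a v).2 hv
  | inv_mul_cancel _ ha v _ hv =>
    obtain ⟨a, rfl⟩ := ha
    rwa [← of_mul a, mul_inv_cancel_left]

/-- The product of the labels `e` along the path from `1` to `u` in the Cayley graph of the free
group, where `e (a, u)` labels the edge `u → a * u` and later labels multiply on the left. The
wreath product carries the labels of all translates of a path at once, which makes the path product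
the value of a homomorphism. -/
def pathProduct (e : X × FreeGroup X → H) (u : FreeGroup X) : H :=
  (FreeGroup.lift (fun a ↦ (⟨fun v ↦ e (a, (FreeGroup.of a)⁻¹ * v), FreeGroup.of a⟩ :
    RegularWreathProduct H (FreeGroup X))) u).left u

variable (e : X × FreeGroup X → H)

@[simp]
theorem pathProduct_one : pathProduct e 1 = 1 := by
  simp [pathProduct]

theorem pathProduct_of_mul (a : X) (u : FreeGroup X) :
    pathProduct e (FreeGroup.of a * u) = e (a, u) * pathProduct e u := by
  simp [pathProduct]

variable {e}

theorem pathProduct_mul {g : FreeGroup X} (he : ∀ a u, e (a, u * g) = e (a, u))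
    (u : FreeGroup X) : pathProduct e (u * g) = pathProduct e u * pathProduct e g := by
  induction u using freeGroup_induction_left with
  | one => simp
  | of_mul a u =>
    rw [mul_assoc, pathProduct_of_mul, pathProduct_of_mul, he, mul_assoc, mul_right_inj]

end PathProduct

namespace freeRack

variable {X : Type*} {R : Set (X × FreeGroup X)}

/-- The augmentation `(a, u) ↦ u⁻¹ * a * u` of the free rack; `q` acts on the free rack as right
translation by `augmentation q`. -/
def augmentation (p : X × FreeGroup X) : FreeGroup X :=
  p.2⁻¹ * FreeGroup.of p.1 * p.2

theorem act_eq (p q : X × FreeGroup X) :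
    (freeRack X).act p q = (p.1, p.2 * augmentation q) := by
  simp [freeRack, augmentation, mul_assoc]

theorem inv_eq (p q : X × FreeGroup X) :
    (freeRack X).inv p q = (p.1, p.2 * (augmentation q)⁻¹) := by
  simp [freeRack, augmentation, mul_assoc]

theorem mul_augmentation (p : X × FreeGroup X) :
    p.2 * augmentation p = FreeGroup.of p.1 * p.2 := by
  simp [augmentation, mul_assoc]

/-- The subgroup generated by the augmentations of the elements of `R`. -/
def augmentationGroup (R : Set (X × FreeGroup X)) : Subgroup (FreeGroup X) :=
  Subgroup.closure (augmentation '' R)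

theorem augmentation_mem {p : X × FreeGroup X} (hp : p ∈ R) :
    augmentation p ∈ augmentationGroup R :=
  Subgroup.subset_closure (Set.mem_image_of_mem _ hp)

theorem mk_mul_mem_iff (hR : (freeRack X).IsSubrack R) {g : FreeGroup X}
    (hg : g ∈ augmentationGroup R) (a : X) (u : FreeGroup X) : (a, u * g) ∈ R ↔ (a, u) ∈ R := by
  induction hg using Subgroup.closure_induction generalizing u with
  | mem _ hx =>
    obtain ⟨q, hq, rfl⟩ := hx
    constructor
    · intro h
      simpa only [inv_eq, mul_inv_cancel_right] using hR.inv_mem _ h q hq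
    · intro h
      simpa only [act_eq] using hR.act_mem _ h q hq
  | one => rw [mul_one]
  | mul x y _ _ hx hy => rw [← mul_assoc, hy, hx]
  | inv x _ hx => rw [← hx, inv_mul_cancel_right]

section Basis

open Classical in
/-- The endpoint of the path from `1` to `u` after the edges in `R` have been contracted. When `R`
is a subrack, it represents the coset `u * augmentationGroup R`. -/
noncomputable def collapse (R : Set (X × FreeGroup X)) : FreeGroup X → FreeGroup X :=
  pathProduct fun p ↦ if p ∈ R then 1 else FreeGroup.of p.1

theorem collapse_one : collapse R 1 = 1 :=
  pathProduct_one _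

theorem collapse_of_mul_of_mem {a : X} {u : FreeGroup X} (h : (a, u) ∈ R) :
    collapse R (FreeGroup.of a * u) = collapse R u := by
  rw [collapse, pathProduct_of_mul, if_pos h, one_mul]

theorem collapse_of_mul_of_notMem {a : X} {u : FreeGroup X} (h : (a, u) ∉ R) :
    collapse R (FreeGroup.of a * u) = FreeGroup.of a * collapse R u := by
  rw [collapse, pathProduct_of_mul, if_neg h]

/-- The translate of the edge `p` that starts at the representative `collapse R p.2`. -/
noncomputable def basePoint (R : Set (X × FreeGroup X)) (p : X × FreeGroup X) :
    X × FreeGroup X :=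
  (p.1, collapse R p.2)

/-- The set of free generators of the subrack `R`. -/
def basis (R : Set (X × FreeGroup X)) : Set (X × FreeGroup X) :=
  basePoint R '' R

theorem basePoint_mem_basis {p : X × FreeGroup X} (hp : p ∈ R) : basePoint R p ∈ basis R :=
  Set.mem_image_of_mem _ hp

theorem collapse_inv_mul_mem (u : FreeGroup X) :
    (collapse R u)⁻¹ * u ∈ augmentationGroup R := by
  induction u using freeGroup_induction_left with
  | one => simp [collapse_one, one_mem]
  | of_mul a u =>
    by_cases h : (a, u) ∈ R
    · rw [collapse_of_mul_of_mem h, ← mul_augmentation (a, u), ← mul_assoc,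
        Subgroup.mul_mem_cancel_right _ (augmentation_mem h)]
    · rw [collapse_of_mul_of_notMem h, mul_inv_rev, mul_assoc, inv_mul_cancel_left]

theorem collapse_inv_mul_mem_basis (u : FreeGroup X) :
    (collapse R u)⁻¹ * u ∈ augmentationGroup (basis R) := by
  induction u using freeGroup_induction_left with
  | one => simp [collapse_one, one_mem]
  | of_mul a u =>
    by_cases h : (a, u) ∈ R
    · have hfactor : (collapse R u)⁻¹ * (FreeGroup.of a * u) =
          augmentation (basePoint R (a, u)) * ((collapse R u)⁻¹ * u) := by
        simp [augmentation, basePoint, mul_assoc]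
      rw [collapse_of_mul_of_mem h, hfactor,
        Subgroup.mul_mem_cancel_left _ (augmentation_mem (basePoint_mem_basis h))]
    · rw [collapse_of_mul_of_notMem h, mul_inv_rev, mul_assoc, inv_mul_cancel_left]

theorem subset_of_basis_subset {T : Set (X × FreeGroup X)} (hT : (freeRack X).IsSubrack T)
    (hbT : basis R ⊆ T) : R ⊆ T := by
  rintro ⟨a, u⟩ h
  have hbase : (a, collapse R u) ∈ T := hbT (basePoint_mem_basis h)
  have hg : (collapse R u)⁻¹ * u ∈ augmentationGroup T :=
    Subgroup.closure_mono (Set.image_mono hbT) (collapse_inv_mul_mem_basis u)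
  rwa [← mk_mul_mem_iff hT hg, mul_inv_cancel_left] at hbase

variable (hR : (freeRack X).IsSubrack R)
include hR

theorem mk_collapse_mem_iff (a : X) (u : FreeGroup X) : (a, collapse R u) ∈ R ↔ (a, u) ∈ R := by
  rw [← mk_mul_mem_iff hR (collapse_inv_mul_mem u), mul_inv_cancel_left]

theorem basis_subset : basis R ⊆ R := by
  rintro _ ⟨⟨a, u⟩, h, rfl⟩
  exact (mk_collapse_mem_iff hR a u).2 h

theorem collapse_mul {g : FreeGroup X} (hg : g ∈ augmentationGroup R) (u : FreeGroup X) :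
    collapse R (u * g) = collapse R u := by
  have hmul : ∀ {g}, g ∈ augmentationGroup R → ∀ u,
      collapse R (u * g) = collapse R u * collapse R g := fun hg ↦
    pathProduct_mul fun a u ↦ by classical exact if_congr (mk_mul_mem_iff hR hg a u) rfl rfl
  induction hg using Subgroup.closure_induction generalizing u with
  | mem _ hx =>
    obtain ⟨p, hp, rfl⟩ := hx
    have hloop : collapse R (p.2 * augmentation p) = collapse R p.2 := by
      rw [mul_augmentation, collapse_of_mul_of_mem hp]
    rw [hmul (augmentation_mem hp), mul_eq_left] at hloop ⊢
    exact hloop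
  | one => rw [mul_one]
  | mul x y _ _ hx hy => rw [← mul_assoc, hy, hx]
  | inv x _ hx => rw [← hx, inv_mul_cancel_right]

theorem collapse_collapse (u : FreeGroup X) : collapse R (collapse R u) = collapse R u := by
  rw [← collapse_mul hR (collapse_inv_mul_mem u), mul_inv_cancel_left]

theorem basePoint_eq_self {s : X × FreeGroup X} (hs : s ∈ basis R) : basePoint R s = s := by
  obtain ⟨p, _, rfl⟩ := hs
  simp only [basePoint, collapse_collapse hR]

end Basis

section Holonomy

variable {H : Type*} [Group H]

open Classical in
/-- The product along the path from `1` to `u` of the labels of its edges in `R`, an edge being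
labelled by the basis element that it is a translate of. For a subrack `R`, this restricts to the
homomorphism `augmentationGroup R →* H` with `augmentation s ↦ label s` for `s ∈ basis R`. -/
noncomputable def holonomy (label : basis R → H) : FreeGroup X → H :=
  pathProduct fun p ↦
    if hp : p ∈ R then label (Set.imageFactorization (basePoint R) R ⟨p, hp⟩) else 1

theorem holonomy_one (label : basis R → H) : holonomy label 1 = 1 :=
  pathProduct_one _

theorem holonomy_of_mul_of_mem (label : basis R → H) {a : X} {u : FreeGroup X}
    (h : (a, u) ∈ R) : holonomy label (FreeGroup.of a * u) =
      label (Set.imageFactorization (basePoint R) R ⟨_, h⟩) * holonomy label u := by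
  rw [holonomy, pathProduct_of_mul, dif_pos h]

theorem holonomy_of_mul_of_notMem (label : basis R → H) {a : X} {u : FreeGroup X}
    (h : (a, u) ∉ R) : holonomy label (FreeGroup.of a * u) = holonomy label u := by
  rw [holonomy, pathProduct_of_mul, dif_neg h, one_mul]

variable (hR : (freeRack X).IsSubrack R) (label : basis R → H)
include hR

theorem holonomy_mul {g : FreeGroup X} (hg : g ∈ augmentationGroup R) (u : FreeGroup X) :
    holonomy label (u * g) = holonomy label u * holonomy label g :=
  pathProduct_mul (fun a u ↦ by
    classical
    exact dite_congr (propext (mk_mul_mem_iff hR hg a u))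
      (fun _ ↦ congrArg label (Subtype.ext (Prod.ext rfl (collapse_mul hR hg u)))) fun _ ↦ rfl) u

theorem holonomy_collapse (u : FreeGroup X) : holonomy label (collapse R u) = 1 := by
  induction u using freeGroup_induction_left with
  | one => rw [collapse_one, holonomy_one]
  | of_mul a u =>
    by_cases h : (a, u) ∈ R
    · rw [collapse_of_mul_of_mem h]
    · rw [collapse_of_mul_of_notMem h,
        holonomy_of_mul_of_notMem label (mt (mk_collapse_mem_iff hR a u).1 h)]

theorem holonomy_augmentation (r : R) :
    holonomy label (augmentation r.1) = (holonomy label r.1.2)⁻¹ *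
      label (Set.imageFactorization (basePoint R) R r) * holonomy label r.1.2 := by
  rw [mul_assoc, eq_inv_mul_iff_mul_eq, ← holonomy_mul hR label (augmentation_mem r.2),
    mul_augmentation, holonomy_of_mul_of_mem label r.2]

end Holonomy

section Extension

variable {β : Type*}

/-- The homomorphism from the subrack `R` to a rack that extends a map `ρ` on the basis. -/
noncomputable def extension (Rb : RackStr β) (ρ : basis R → β) (r : R) : β :=
  (holonomy (fun s ↦ (Rb.translation (ρ s))⁻¹) r.1.2)⁻¹ •
    ρ (Set.imageFactorization (basePoint R) R r)

variable (hR : (freeRack X).IsSubrack R) {Rb : RackStr β}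
include hR

theorem inv_holonomy_augmentation (ρ : basis R → β) (r : R) :
    (holonomy (fun s ↦ (Rb.translation (ρ s))⁻¹) (augmentation r.1))⁻¹ =
      Rb.translation (extension Rb ρ r) := by
  rw [holonomy_augmentation hR, extension, ← RackStr.conj_translation]
  simp only [mul_inv_rev, inv_inv, mul_assoc]

theorem isRackHom_extension (ρ : basis R → β) :
    IsRackHom ((freeRack X).subrack R hR.act_mem hR.inv_mem) Rb (extension Rb ρ) := by
  intro p q
  have hact : ((freeRack X).subrack R hR.act_mem hR.inv_mem).act p q =
      ⟨(p.1.1, p.1.2 * augmentation q.1),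
        (mk_mul_mem_iff hR (augmentation_mem q.2) _ _).2 p.2⟩ :=
    Subtype.ext (act_eq p.1 q.1)
  rw [← RackStr.translation_smul (Ra := Rb), ← inv_holonomy_augmentation hR, hact]
  simp only [extension, holonomy_mul hR _ (augmentation_mem q.2), mul_inv_rev, mul_smul,
    Set.imageFactorization, basePoint, collapse_mul hR (augmentation_mem q.2)]

theorem extension_basis (ρ : basis R → β) (s : basis R) :
    extension Rb ρ ⟨s, basis_subset hR s.2⟩ = ρ s := by
  have hbase : Set.imageFactorization (basePoint R) R ⟨s, basis_subset hR s.2⟩ = s :=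
    Subtype.ext (basePoint_eq_self hR s.2)
  have hcollapse : collapse R s.1.2 = s.1.2 := congrArg Prod.snd (basePoint_eq_self hR s.2)
  rw [extension, hbase, ← hcollapse, holonomy_collapse hR, inv_one, one_smul]

theorem eq_of_eqOn_basis {f g : R → β}
    (hf : IsRackHom ((freeRack X).subrack R hR.act_mem hR.inv_mem) Rb f)
    (hg : IsRackHom ((freeRack X).subrack R hR.act_mem hR.inv_mem) Rb g)
    (hfg : ∀ s : basis R, f ⟨s, basis_subset hR s.2⟩ = g ⟨s, basis_subset hR s.2⟩) : f = g := by
  have hsub : R ⊆ Subtype.val '' {r : R | f r = g r} :=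
    subset_of_basis_subset (hR.image_val (hf.isSubrack_eqLocus hg))
      fun s hs ↦ ⟨⟨s, basis_subset hR hs⟩, hfg ⟨s, hs⟩, rfl⟩
  funext r
  obtain ⟨r', hr', hval⟩ := hsub r.2
  rwa [← Subtype.ext hval]

end Extension

end freeRack

/-- Every subrack `R` of the free rack `FR(X) = X × F(X)` is free:
there is a subset `S ⊆ R` such that `R` with the induced operations, together with the
inclusion `S ↪ R`, satisfies the universal property of the free rack on `S`: for every
rack `Q` and every function `ρ : S → Q` there is a unique rack homomorphism
`ρ̄ : R → Q` whose restriction to `S` equals `ρ`. -/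
theorem subrack_of_freeRack_is_free {X : Type*} (R : Set (X × FreeGroup X))
    (hact : ∀ p ∈ R, ∀ q ∈ R, (freeRack X).act p q ∈ R)
    (hinv : ∀ p ∈ R, ∀ q ∈ R, (freeRack X).inv p q ∈ R) :
    ∃ (S : Set (X × FreeGroup X)) (hSR : S ⊆ R),
      ∀ (Q : Type*) (RQ : RackStr Q) (ρ : S → Q),
        ∃! ρbar : R → Q,
          IsRackHom ((freeRack X).subrack R hact hinv) RQ ρbar ∧
            ∀ (s : X × FreeGroup X) (hs : s ∈ S), ρbar ⟨s, hSR hs⟩ = ρ ⟨s, hs⟩ := by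
  have hR : (freeRack X).IsSubrack R := ⟨hact, hinv⟩
  refine ⟨freeRack.basis R, freeRack.basis_subset hR, fun Q RQ ρ ↦ ?_⟩
  refine ⟨freeRack.extension RQ ρ, ⟨freeRack.isRackHom_extension hR ρ, fun s hs ↦
    freeRack.extension_basis hR ρ ⟨s, hs⟩⟩, ?_⟩
  rintro f ⟨hf, hfρ⟩
  exact freeRack.eq_of_eqOn_basis hR hf (freeRack.isRackHom_extension hR ρ) fun s ↦
    (hfρ s s.2).trans (freeRack.extension_basis hR ρ s).symm
end

section
/- Let X be a set and FR(X) = X × F(X) the free rack on X. For every x ∈ X and w ∈ F(X), the subrack of FR(X) generated by the single element (x, w) (i.e., the smallest subset containing (x,w) and closed under ▷ and ▷⁻¹) is exactly the set { (x, xⁿ·w) : n ∈ ℤ }, and this set equals the preimage under the map f((y,v)) = v⁻¹·y·v of the element w⁻¹·x·w ∈ F(X). -/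
/-- The subrack of a rack generated by a subset `A`: the smallest subset containing `A`
and closed under `▷` and `▷⁻¹`. -/
def rackClosure {α : Type*} (Ra : RackStr α) (A : Set α) : Set α :=
  ⋂₀ {R : Set α | A ⊆ R ∧ (∀ x ∈ R, ∀ y ∈ R, Ra.act x y ∈ R) ∧
      ∀ x ∈ R, ∀ y ∈ R, Ra.inv x y ∈ R}

namespace RackStr

variable {α : Type*} (Ra : RackStr α)

/-- Right translation `c ↦ c ▷ a` in a rack, as a permutation with inverse `c ↦ c ▷⁻¹ a`. -/
def rightTranslation (a : α) : Equiv.Perm α where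
  toFun c := Ra.act c a
  invFun c := Ra.inv c a
  left_inv c := Ra.act_inv c a
  right_inv c := Ra.inv_act c a

theorem rightTranslation_apply (a c : α) : Ra.rightTranslation a c = Ra.act c a :=
  rfl

theorem inv_rightTranslation_apply (a c : α) : (Ra.rightTranslation a)⁻¹ c = Ra.inv c a :=
  rfl

theorem rightTranslation_mul_rightTranslation (a b : α) :
    Ra.rightTranslation (Ra.act a b) * Ra.rightTranslation b =
      Ra.rightTranslation b * Ra.rightTranslation a :=
  Equiv.ext fun c => (Ra.act_dist c a b).symm

theorem rightTranslation_act (a b : α) :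
    Ra.rightTranslation (Ra.act a b) =
      Ra.rightTranslation b * Ra.rightTranslation a * (Ra.rightTranslation b)⁻¹ :=
  eq_mul_inv_of_mul_eq (Ra.rightTranslation_mul_rightTranslation a b)

theorem rightTranslation_inv (a b : α) :
    Ra.rightTranslation (Ra.inv a b) =
      (Ra.rightTranslation b)⁻¹ * Ra.rightTranslation a * Ra.rightTranslation b := by
  have h := Ra.rightTranslation_mul_rightTranslation (Ra.inv a b) b
  rw [Ra.inv_act] at h
  rw [mul_assoc, h, inv_mul_cancel_left]

theorem rightTranslation_zpow_apply_self (a : α) (n : ℤ) :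
    Ra.rightTranslation ((Ra.rightTranslation a ^ n) a) = Ra.rightTranslation a := by
  induction n with
  | zero => rfl
  | succ n ih =>
    rw [← mul_self_zpow, Equiv.Perm.mul_apply, rightTranslation_apply, rightTranslation_act, ih,
      mul_inv_cancel_right]
  | pred n ih =>
    rw [sub_eq_neg_add, zpow_add, zpow_neg_one, Equiv.Perm.mul_apply, inv_rightTranslation_apply,
      rightTranslation_inv, ih, inv_mul_cancel, one_mul]

end RackStr

section SingletonClosure

variable {α : Type*} {Ra : RackStr α} {A : Set α}

theorem subset_rackClosure : A ⊆ rackClosure Ra A :=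
  Set.subset_sInter fun _ hR => hR.1

theorem act_mem_rackClosure {a b : α} (ha : a ∈ rackClosure Ra A) (hb : b ∈ rackClosure Ra A) :
    Ra.act a b ∈ rackClosure Ra A :=
  fun R hR => hR.2.1 a (ha R hR) b (hb R hR)

theorem inv_mem_rackClosure {a b : α} (ha : a ∈ rackClosure Ra A) (hb : b ∈ rackClosure Ra A) :
    Ra.inv a b ∈ rackClosure Ra A :=
  fun R hR => hR.2.2 a (ha R hR) b (hb R hR)

theorem rightTranslation_zpow_mem_rackClosure {a b : α} (ha : a ∈ rackClosure Ra A)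
    (hb : b ∈ rackClosure Ra A) (n : ℤ) : (Ra.rightTranslation a ^ n) b ∈ rackClosure Ra A := by
  induction n with
  | zero => exact hb
  | succ n ih =>
    rw [← mul_self_zpow]
    exact act_mem_rackClosure ih ha
  | pred n ih =>
    rw [sub_eq_neg_add, zpow_add, zpow_neg_one]
    exact inv_mem_rackClosure ih ha

theorem rackClosure_singleton (Ra : RackStr α) (a : α) :
    rackClosure Ra {a} = Set.range fun n : ℤ => (Ra.rightTranslation a ^ n) a := by
  apply Set.Subset.antisymm
  · refine Set.sInter_subset_of_mem ⟨Set.singleton_subset_iff.2 ⟨0, rfl⟩, ?_, ?_⟩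
    · rintro _ ⟨m, rfl⟩ _ ⟨n, rfl⟩
      rw [← Ra.rightTranslation_apply, Ra.rightTranslation_zpow_apply_self,
        ← Equiv.Perm.mul_apply, mul_self_zpow]
      exact ⟨m + 1, rfl⟩
    · rintro _ ⟨m, rfl⟩ _ ⟨n, rfl⟩
      rw [← Ra.inv_rightTranslation_apply, Ra.rightTranslation_zpow_apply_self,
        ← Equiv.Perm.mul_apply, ← zpow_neg_one, ← zpow_add]
      exact ⟨-1 + m, rfl⟩
  · rintro _ ⟨n, rfl⟩
    have ha : a ∈ rackClosure Ra {a} := subset_rackClosure (Set.mem_singleton a)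
    exact rightTranslation_zpow_mem_rackClosure ha ha n

end SingletonClosure

section GeneratorCentralizer

variable {X : Type*} {x y : X}

theorem isConj_freeGroup_of_iff : IsConj (FreeGroup.of x) (FreeGroup.of y) ↔ x = y where
  mp h := FreeAbelianGroup.of_injective
    (congrArg Additive.ofMul (isConj_iff_eq.1 (Abelianization.of.map_isConj h)))
  mpr h := h ▸ IsConj.refl _

theorem freeGroup_mk_singleton_mem_zpowers (x : X) (b : Bool) :
    FreeGroup.mk [(x, b)] ∈ Subgroup.zpowers (FreeGroup.of x) := by
  cases b with
  | false => exact inv_mem (Subgroup.mem_zpowers (FreeGroup.of x))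
  | true => exact Subgroup.mem_zpowers (FreeGroup.of x)

theorem fst_eq_of_isReduced_cons_of_commute {a : X × Bool} {L : List (X × Bool)}
    (hL : FreeGroup.IsReduced (a :: L))
    (hcomm : Commute (FreeGroup.of x) (FreeGroup.mk (a :: L))) : a.1 = x := by
  classical
  by_contra hne
  have hred : FreeGroup.IsReduced ((x, true) :: a :: L) :=
    FreeGroup.isReduced_cons_cons.2 ⟨fun h => absurd h.symm hne, hL⟩
  have hreduce : FreeGroup.reduce (a :: L ++ [(x, true)]) = (x, true) :: a :: L :=
    (FreeGroup.reduce.sound hcomm.eq.symm).trans hred.reduce_eq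
  have hsub : ((x, true) :: a :: L).Sublist (a :: L ++ [(x, true)]) :=
    hreduce ▸ FreeGroup.reduce.red.sublist
  have hwords : (x, true) :: a :: L = a :: L ++ [(x, true)] := hsub.eq_of_length (by simp)
  exact hne (congrArg Prod.fst (List.cons.inj hwords).1).symm

theorem freeGroup_mk_mem_zpowers_of_commute {L : List (X × Bool)} (hL : FreeGroup.IsReduced L)
    (hcomm : Commute (FreeGroup.of x) (FreeGroup.mk L)) :
    FreeGroup.mk L ∈ Subgroup.zpowers (FreeGroup.of x) := by
  induction L with
  | nil => exact one_mem _
  | cons a L ih =>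
    obtain rfl : a.1 = x := fst_eq_of_isReduced_cons_of_commute hL hcomm
    have hletter := freeGroup_mk_singleton_mem_zpowers a.1 a.2
    have hsplit : FreeGroup.mk (a :: L) = FreeGroup.mk [a] * FreeGroup.mk L := rfl
    have hletter_comm : Commute (FreeGroup.of a.1) (FreeGroup.mk [a]) := by
      obtain ⟨k, hk⟩ := hletter
      exact hk ▸ Commute.self_zpow _ k
    have htail_comm : Commute (FreeGroup.of a.1) (FreeGroup.mk L) := by
      rw [← inv_mul_cancel_left (FreeGroup.mk [a]) (FreeGroup.mk L), ← hsplit]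
      exact hletter_comm.inv_right.mul_right hcomm
    rw [hsplit]
    exact mul_mem hletter (ih (hL.infix (List.suffix_cons a L).isInfix) htail_comm)

theorem commute_freeGroup_of_iff {g : FreeGroup X} :
    Commute (FreeGroup.of x) g ↔ g ∈ Subgroup.zpowers (FreeGroup.of x) := by
  classical
  constructor
  · intro hcomm
    rw [← FreeGroup.mk_toWord (x := g)] at hcomm ⊢
    exact freeGroup_mk_mem_zpowers_of_commute FreeGroup.isReduced_toWord hcomm
  · rintro ⟨k, rfl⟩
    exact Commute.self_zpow _ k

theorem inv_mul_freeGroup_of_mul_eq_iff {v w : FreeGroup X} :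
    v⁻¹ * FreeGroup.of y * v = w⁻¹ * FreeGroup.of x * w ↔
      y = x ∧ ∃ n : ℤ, v = FreeGroup.of x ^ n * w := by
  constructor
  · intro h
    have hconj : (v * w⁻¹)⁻¹ * FreeGroup.of y * (v * w⁻¹) = FreeGroup.of x := by
      calc (v * w⁻¹)⁻¹ * FreeGroup.of y * (v * w⁻¹)
          = w * (v⁻¹ * FreeGroup.of y * v) * w⁻¹ := by group
        _ = FreeGroup.of x := by rw [h]; group
    obtain rfl : y = x :=
      isConj_freeGroup_of_iff.1 (isConj_iff.2 ⟨(v * w⁻¹)⁻¹, by rwa [inv_inv]⟩)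
    have hcomm : Commute (FreeGroup.of y) (v * w⁻¹) := by
      rwa [mul_assoc, inv_mul_eq_iff_eq_mul] at hconj
    obtain ⟨n, hn⟩ := commute_freeGroup_of_iff.1 hcomm
    exact ⟨rfl, n, mul_inv_eq_iff_eq_mul.1 hn.symm⟩
  · rintro ⟨rfl, n, rfl⟩
    group

end GeneratorCentralizer

theorem freeRack_rightTranslation_zpow_apply {X : Type*} (p q : X × FreeGroup X) (n : ℤ) :
    ((freeRack X).rightTranslation p ^ n) q =
      (q.1, q.2 * p.2⁻¹ * FreeGroup.of p.1 ^ n * p.2) := by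
  induction n with
  | zero => simp
  | succ n ih =>
    rw [← mul_self_zpow, Equiv.Perm.mul_apply, ih, RackStr.rightTranslation_apply]
    simp only [freeRack, Prod.mk.injEq, true_and]
    group
  | pred n ih =>
    rw [sub_eq_neg_add, zpow_add, zpow_neg_one, Equiv.Perm.mul_apply, ih,
      RackStr.inv_rightTranslation_apply]
    simp only [freeRack, Prod.mk.injEq, true_and]
    group

/-- In the free rack `FR(X) = X × F(X)`, the subrack generated by a
single element `(x, w)` is exactly `{(x, xⁿ·w) : n ∈ ℤ}`, and this set is the preimage
of `w⁻¹·x·w` under the map `f((y,v)) = v⁻¹·y·v`. -/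
theorem rackClosure_singleton_freeRack {X : Type*} (x : X) (w : FreeGroup X) :
    rackClosure (freeRack X) {(x, w)} =
        {p : X × FreeGroup X | ∃ n : ℤ, p = (x, FreeGroup.of x ^ n * w)} ∧
      {p : X × FreeGroup X | ∃ n : ℤ, p = (x, FreeGroup.of x ^ n * w)} =
        (fun p : X × FreeGroup X => p.2⁻¹ * FreeGroup.of p.1 * p.2) ⁻¹'
          {w⁻¹ * FreeGroup.of x * w} := by
  constructor
  · ext p
    simp only [rackClosure_singleton, freeRack_rightTranslation_zpow_apply, Set.mem_range,
      Set.mem_ofPred_eq, mul_inv_cancel, one_mul, eq_comm]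
  · ext ⟨y, v⟩
    simp only [Set.mem_ofPred_eq, Set.mem_preimage, Set.mem_singleton_iff, Prod.mk.injEq,
      exists_and_left, inv_mul_freeGroup_of_mul_eq_iff]
end

section
/- Let X be a set and FR(X) = X × F(X) the free rack on X. For x ∈ X, w ∈ F(X), and an integer k ≥ 1, the k-th rack power of (x,w), defined by (x,w)^[1] = (x,w) and (x,w)^[k+1] = (x,w)^[k] ▷ (x,w)^[k], equals (x, x^{k-1}·w). Consequently, the rack powers of any element of FR(X) are pairwise distinct: for k, l ≥ 1 with k ≠ l, (x,w)^[k] ≠ (x,w)^[l]. -/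
/-!
In `FR(X)` squaring cancels the conjugation, `(x, w) ▷ (x, w) = (x, w * w⁻¹ * x * w) = (x, x * w)`,
so passing to the next rack power is left multiplication by the generator `x` on the second
component. Free groups are torsion-free, so the powers of `x` are pairwise distinct.
-/

/-- The squaring map `a ↦ a ▷ a` of a rack. Its iterates are the rack powers, with the exponent
shifted by one: `a^[k+1]` is the `k`-th iterate of squaring applied to `a`. -/
def RackStr.square {α : Type*} (R : RackStr α) (a : α) : α :=
  R.act a a

theorem eq_iterate_sub_one {α : Type*} {f : α → α} {s : ℕ → α}
    (hs : ∀ k, 1 ≤ k → s (k + 1) = f (s k)) {k : ℕ} (hk : 1 ≤ k) :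
    s k = f^[k - 1] (s 1) := by
  induction k, hk using Nat.le_induction with
  | base => rfl
  | succ k hk ih =>
    rw [hs k hk, ih, ← Function.iterate_succ_apply' f, Nat.succ_eq_add_one,
      Nat.sub_add_cancel hk, Nat.add_sub_cancel]

section FreeRack

variable {X : Type*}

theorem freeRack_square_mk (x : X) (w : FreeGroup X) :
    (freeRack X).square (x, w) = (x, FreeGroup.of x * w) := by
  simp [RackStr.square, freeRack]

theorem freeRack_square_iterate_mk (x : X) (w : FreeGroup X) (n : ℕ) :
    (freeRack X).square^[n] (x, w) = (x, FreeGroup.of x ^ n * w) := by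
  have hsemiconj : Function.Semiconj (Prod.mk x) (FreeGroup.of x * ·) (freeRack X).square :=
    fun v ↦ (freeRack_square_mk x v).symm
  rw [← hsemiconj.iterate_right n w, mul_left_iterate_apply]

theorem freeRack_square_iterate_injective (p : X × FreeGroup X) :
    Function.Injective fun n : ℕ ↦ (freeRack X).square^[n] p := by
  obtain ⟨x, w⟩ := p
  intro m n hmn
  simp only [freeRack_square_iterate_mk, Prod.mk.injEq, true_and, mul_left_inj] at hmn
  exact (IsMulTorsionFree.pow_right_inj (FreeGroup.of_ne_one x)).mp hmn

end FreeRack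

/-- In the free rack `FR(X) = X × F(X)`, let `P p k` denote the `k`-th
rack power `p^[k]` (for `k ≥ 1`), characterized by `p^[1] = p` and
`p^[k+1] = p^[k] ▷ p^[k]`. Then `(x,w)^[k] = (x, x^(k-1)·w)`; consequently the rack
powers of any element are pairwise distinct: `(x,w)^[k] ≠ (x,w)^[l]` for `k ≠ l`
(`k, l ≥ 1`). -/
theorem freeRack_rackPow {X : Type*} (P : X × FreeGroup X → ℕ → X × FreeGroup X)
    (hP1 : ∀ p, P p 1 = p)
    (hPsucc : ∀ p k, 1 ≤ k → P p (k + 1) = (freeRack X).act (P p k) (P p k)) :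
    (∀ (x : X) (w : FreeGroup X) (k : ℕ), 1 ≤ k →
        P (x, w) k = (x, FreeGroup.of x ^ (k - 1) * w)) ∧
      ∀ (x : X) (w : FreeGroup X) (k l : ℕ), 1 ≤ k → 1 ≤ l → k ≠ l →
        P (x, w) k ≠ P (x, w) l := by
  have hP (p : X × FreeGroup X) {k : ℕ} (hk : 1 ≤ k) :
      P p k = (freeRack X).square^[k - 1] p := by
    rw [eq_iterate_sub_one (f := (freeRack X).square) (s := P p) (hPsucc p) hk, hP1]
  refine ⟨fun x w k hk ↦ ?_, fun x w k l hk hl hkl h ↦ hkl ?_⟩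
  · rw [hP _ hk, freeRack_square_iterate_mk]
  · rw [hP _ hk, hP _ hl] at h
    exact Nat.sub_one_cancel hk hl (freeRack_square_iterate_injective _ h)
end
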